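/- Let k ≥ 1 be an integer and let G be an (n−k−1)-regular graph on n vertices whose complement Ḡ (which is k-regular) contains no subgraph isomorphic to the complete bipartite graph K_{3,3}; that is, there do not exist disjoint sets X, Y ⊆ V with |X| = |Y| = 3 such that every vertex of X is adjacent in Ḡ to every vertex of Y. Then box(G) ≥ n/8. -/

import Mathlib

/-!
Write `Gᶜ` for the `k`-regular complement of `G`. If `G = ⨅ i, I i` with `b` interval graphs, every
edge of `Gᶜ` is a non-edge of some `I i`, that is, a pair of disjoint intervals in the `i`-th
representation.

Fix `i`. Let `A` consist of two vertices with the smallest right endpoints and `B` of two vertices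
with the largest left endpoints. If the interval of `u` lay entirely to the left of that of `v` with
`u ∉ A` and `v ∉ B`, then every interval of `A ∪ {u}` would lie entirely to the left of every
interval of `B ∪ {v}`, giving a `K_{3,3}` in `Gᶜ`. Hence `A ∪ B` meets every non-edge of `I i`
(`exists_cover_of_interval`).

The union of these sets over all `i` is a vertex cover of `Gᶜ` with at most `4 * b` vertices. A
vertex cover of a regular graph of positive degree contains at least half of the vertices
(`card_le_two_mul_cover`), so `n ≤ 8 * b`.

The infimum defining `boxicity` is attained because every finite graph is an intersection of
interval graphs, one for each vertex (`exists_interval_representation`).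
-/

/-- `I` is an interval graph: it can be represented by assigning to each vertex
a closed real interval so that two distinct vertices are adjacent in `I`
iff their intervals intersect. -/
def IsIntervalGraph {V : Type*} (I : SimpleGraph V) : Prop :=
  ∃ f : V → Set ℝ, (∀ v, ∃ a b : ℝ, a ≤ b ∧ f v = Set.Icc a b) ∧
    ∀ u v : V, u ≠ v → (I.Adj u v ↔ (f u ∩ f v).Nonempty)

/-- The boxicity of `G`: the least `k` such that `G` is the intersection
(infimum) of `k` interval graphs on the same vertex set. -/
noncomputable def boxicity {V : Type*} (G : SimpleGraph V) : ℕ :=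
  sInf {k : ℕ | ∃ I : Fin k → SimpleGraph V,
    (∀ i, IsIntervalGraph (I i)) ∧ G = ⨅ i, I i}

/-- The number of edges of `G`. -/
noncomputable def numEdges {V : Type*} (G : SimpleGraph V) : ℕ :=
  G.edgeSet.ncard

/-- A graph on a finite vertex set is an intersection of finitely many interval graphs: the graph
belonging to `v` has as its non-edges exactly the pairs consisting of `v` and a non-neighbour. -/
lemma exists_interval_representation {V : Type*} [Fintype V] (G : SimpleGraph V) :
    ∃ k : ℕ, ∃ I : Fin k → SimpleGraph V, (∀ i, IsIntervalGraph (I i)) ∧ G = ⨅ i, I i := by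
  classical
  -- `v` gets `[0, 0]`, its neighbours `[0, 1]`, and all other vertices `[1, 1]`.
  let l : V → V → ℝ := fun v x => if x = v ∨ G.Adj v x then 0 else 1
  let r : V → V → ℝ := fun v x => if x = v then 0 else 1
  have hlr : ∀ v x, l v x ≤ r v x := by
    intro v x
    simp only [l, r]
    split_ifs <;> simp_all
  let J : V → SimpleGraph V := fun v =>
    { Adj := fun x y => x ≠ y ∧ (Set.Icc (l v x) (r v x) ∩ Set.Icc (l v y) (r v y)).Nonempty
      symm := ⟨fun x y h => ⟨h.1.symm, by rw [Set.inter_comm]; exact h.2⟩⟩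
      loopless := ⟨fun x h => h.1 rfl⟩ }
  let e := Fintype.equivFin V
  refine ⟨Fintype.card V, fun i => J (e.symm i), fun i => ?_, ?_⟩
  · exact ⟨fun x => Set.Icc (l (e.symm i) x) (r (e.symm i) x),
      fun x => ⟨_, _, hlr _ x, rfl⟩, fun x y hxy => ⟨fun h => h.2, fun h => ⟨hxy, h⟩⟩⟩
  · ext a b
    rw [SimpleGraph.iInf_adj]
    constructor
    · intro h
      refine ⟨fun i => ⟨h.ne, ?_⟩, h.ne⟩
      generalize e.symm i = v
      rw [Set.Icc_inter_Icc, Set.nonempty_Icc]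
      have h1 := h.symm
      have h2 := h.ne
      simp only [l, r, sup_le_iff, le_inf_iff]
      refine ⟨⟨hlr v a, ?_⟩, ⟨?_, hlr v b⟩⟩ <;> split_ifs <;> simp_all
    · rintro ⟨h, hne⟩
      obtain ⟨-, z, ⟨-, hz⟩, ⟨hz', -⟩⟩ := h (e a)
      by_contra hab
      have hz2 : (1 : ℝ) ≤ z := by simpa [l, hab, hne.symm] using hz'
      have hz3 : z ≤ (0 : ℝ) := by simpa [r] using hz
      linarith

lemma exists_two_minimal {V : Type*} [Fintype V] [DecidableEq V] (f : V → ℝ)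
    (h : 2 ≤ Fintype.card V) :
    ∃ A : Finset V, A.card = 2 ∧ ∀ a ∈ A, ∀ u ∉ A, f a ≤ f u := by
  have h0 : (Finset.univ : Finset V).Nonempty := by
    rw [← Finset.card_pos, Finset.card_univ]; omega
  obtain ⟨a, -, ha⟩ := Finset.exists_min_image Finset.univ f h0
  have h1 : (Finset.univ.erase a).Nonempty := by
    rw [← Finset.card_pos, Finset.card_erase_of_mem (Finset.mem_univ a), Finset.card_univ]; omega
  obtain ⟨b, hb, hb'⟩ := Finset.exists_min_image (Finset.univ.erase a) f h1
  refine ⟨{a, b}, Finset.card_pair (Finset.ne_of_mem_erase hb).symm, ?_⟩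
  intro x hx u hu
  simp only [Finset.mem_insert, Finset.mem_singleton, not_or] at hx hu
  rcases hx with rfl | rfl
  · exact ha u (Finset.mem_univ u)
  · exact hb' u (Finset.mem_erase.2 ⟨hu.1, Finset.mem_univ u⟩)

/-- Four vertices suffice to meet all non-edges of an interval graph that contains `G`, when the
complement of `G` has no `K_{3,3}`. -/
lemma exists_cover_of_interval {V : Type*} [Fintype V] [DecidableEq V] (G I : SimpleGraph V)
    (hV : 2 ≤ Fintype.card V) (hGI : G ≤ I) (hI : IsIntervalGraph I)
    (hK33 : ¬∃ X Y : Finset V, Disjoint X Y ∧ X.card = 3 ∧ Y.card = 3 ∧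
      ∀ x ∈ X, ∀ y ∈ Y, Gᶜ.Adj x y) :
    ∃ S : Finset V, S.card ≤ 4 ∧ ∀ u v, Iᶜ.Adj u v → u ∈ S ∨ v ∈ S := by
  obtain ⟨f, hf, hfI⟩ := hI
  choose l r hlr hf using hf
  obtain ⟨A, hA, hA'⟩ := exists_two_minimal r hV
  obtain ⟨B, hB, hB'⟩ := exists_two_minimal (fun v => -l v) hV
  have key : ∀ u v, r u < l v → u ∈ A ∨ v ∈ B := by
    intro u v huv
    by_contra! hcon
    obtain ⟨hu, hv⟩ := hcon
    have hlt : ∀ x ∈ insert u A, ∀ y ∈ insert v B, r x < l y := by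
      intro x hx y hy
      have h1 : r x ≤ r u := by
        rcases Finset.mem_insert.1 hx with rfl | hx
        · exact le_rfl
        · exact hA' x hx u hu
      have h2 : l v ≤ l y := by
        rcases Finset.mem_insert.1 hy with rfl | hy
        · exact le_rfl
        · exact neg_le_neg_iff.1 (hB' y hy v hv)
      linarith
    have hne : ∀ x ∈ insert u A, ∀ y ∈ insert v B, x ≠ y := by
      rintro x hx _ hy rfl
      exact absurd (hlt x hx x hy) (not_lt.2 (hlr x))
    refine hK33 ⟨insert u A, insert v B, ?_, ?_, ?_, ?_⟩
    · exact Finset.disjoint_left.2 fun x hx hy => hne x hx x hy rfl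
    · rw [Finset.card_insert_of_notMem hu, hA]
    · rw [Finset.card_insert_of_notMem hv, hB]
    · intro x hx y hy
      refine (SimpleGraph.compl_adj _ _ _).2 ⟨hne x hx y hy, fun hadj => ?_⟩
      obtain ⟨z, hz, hz'⟩ := (hfI x y (hne x hx y hy)).1 (hGI hadj)
      rw [hf] at hz hz'
      linarith [hz.2, hz'.1, hlt x hx y hy]
  refine ⟨A ∪ B, (Finset.card_union_le A B).trans (by omega), fun u v huv => ?_⟩
  obtain ⟨hne, hnadj⟩ := (SimpleGraph.compl_adj _ _ _).1 huv
  have hsep : r u < l v ∨ r v < l u := by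
    by_contra! hcon
    apply hnadj
    rw [hfI u v hne, hf, hf, Set.Icc_inter_Icc, Set.nonempty_Icc]
    exact sup_le (le_inf (hlr u) hcon.2) (le_inf hcon.1 (hlr v))
  simp only [Finset.mem_union]
  rcases hsep with h | h
  · have := key u v h
    tauto
  · have := key v u h
    tauto

/-- A vertex cover of a regular graph of positive degree contains at least half of the vertices:
double count the edges between the cover and its complement, which is independent. -/
lemma card_le_two_mul_cover {V : Type*} [Fintype V] [DecidableEq V] (H : SimpleGraph V)
    [DecidableRel H.Adj] (k : ℕ) (hk : 1 ≤ k) (hH : H.IsRegularOfDegree k) (S : Finset V)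
    (hS : ∀ u v, H.Adj u v → u ∈ S ∨ v ∈ S) : Fintype.card V ≤ 2 * S.card := by
  have h : Sᶜ.card * k ≤ S.card * k := by
    refine Finset.card_mul_le_card_mul H.Adj (fun a ha => ?_) (fun b _ => ?_)
    · rw [← hH a, ← H.card_neighborFinset_eq_degree]
      refine Finset.card_le_card fun x hx => ?_
      rw [SimpleGraph.mem_neighborFinset] at hx
      rw [Finset.mem_bipartiteAbove]
      exact ⟨(hS a x hx).resolve_left (Finset.mem_compl.1 ha), hx⟩
    · rw [← hH b, ← H.card_neighborFinset_eq_degree]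
      refine Finset.card_le_card fun x hx => ?_
      rw [SimpleGraph.mem_neighborFinset]
      exact ((Finset.mem_bipartiteBelow _).1 hx).2.symm
  have h' := Nat.le_of_mul_le_mul_right h hk
  have := Finset.card_add_card_compl S
  omega

theorem box_lower_bound_no_K33_complement {V : Type*} [Fintype V] [DecidableEq V]
    (G : SimpleGraph V) [DecidableRel G.Adj] (n k : ℕ)
    (hn : Fintype.card V = n) (hk1 : 1 ≤ k) (hk2 : k ≤ n - 1)
    (hreg : G.IsRegularOfDegree (n - k - 1))
    (hK33 : ¬∃ X Y : Finset V, Disjoint X Y ∧ X.card = 3 ∧ Y.card = 3 ∧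
      ∀ x ∈ X, ∀ y ∈ Y, Gᶜ.Adj x y) :
    (boxicity G : ℝ) ≥ (n : ℝ) / 8 := by
  have hmem : ∃ I : Fin (boxicity G) → SimpleGraph V,
      (∀ i, IsIntervalGraph (I i)) ∧ G = ⨅ i, I i :=
    Nat.sInf_mem (exists_interval_representation G)
  obtain ⟨I, hI, hGI⟩ := hmem
  have hcov := fun i => exists_cover_of_interval G (I i) (by omega)
    (hGI.trans_le (iInf_le I i)) (hI i) hK33
  choose S hS4 hS using hcov
  have hreg' : Gᶜ.IsRegularOfDegree k := by
    have h := hreg.compl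
    have hk : Fintype.card V - 1 - (n - k - 1) = k := by omega
    rwa [hk] at h
  have hcard := card_le_two_mul_cover Gᶜ k hk1 hreg' (Finset.univ.biUnion S) (by
    intro u v huv
    obtain ⟨hne, hnadj⟩ := (SimpleGraph.compl_adj _ _ _).1 huv
    have hex : ∃ i, ¬ (I i).Adj u v := by
      by_contra! hcon
      apply hnadj
      rw [hGI, SimpleGraph.iInf_adj]
      exact ⟨hcon, hne⟩
    obtain ⟨i, hi⟩ := hex
    have := hS i u v ((SimpleGraph.compl_adj _ _ _).2 ⟨hne, hi⟩)
    simp only [Finset.mem_biUnion, Finset.mem_univ, true_and]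
    exact this.imp (fun h => ⟨i, h⟩) (fun h => ⟨i, h⟩))
  have hle : (Finset.univ.biUnion S).card ≤ boxicity G * 4 := by
    simpa using Finset.card_biUnion_le_card_mul Finset.univ S 4 fun i _ => hS4 i
  have h8 : n ≤ 8 * boxicity G := by omega
  have h8' : (n : ℝ) ≤ 8 * (boxicity G : ℝ) := by exact_mod_cast h8
  linarith
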